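/- arXiv:2009.09885 — 4 statements merged into one kernel-verified Lean document; each statement's English description precedes it below -/
import Mathlib

section
/- Let n ≥ 1, let D be a Lie derivation of L of type ε^∨_{2n+2}, and let D₀^∨ be a Lie derivation of type ε₀^∨. Then the 2n+1 Lie derivations (ad D₀^∨)^k(D) for k = 0, 1, …, 2n are linearly independent over ℚ in the ℚ-module of Lie derivations of L. -/
open scoped BigOperators

noncomputable section

/-- The free Lie algebra over ℚ on two generators. -/
abbrev L2 : Type := FreeLieAlgebra ℚ (Fin 2)

/-- The first generator 𝖺 of the free Lie algebra. -/
def ga : L2 := FreeLieAlgebra.of ℚ 0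

/-- The second generator 𝖻 of the free Lie algebra. -/
def gb : L2 := FreeLieAlgebra.of ℚ 1

/-- The adjoint action `ad x : y ↦ ⁅x, y⁆` on the free Lie algebra. -/
def adL (x : L2) : Module.End ℚ L2 := LieAlgebra.ad ℚ L2 x

/-- A Lie derivation `D` of `L2` is of type `ε^∨_{2n+2}` if
`D 𝖺 = ad(𝖺)^{2n+2} 𝖻` and
`D 𝖻 = (1/2) ∑_{i+j=2n+1} (-1)^i ⁅ad(𝖺)^i 𝖻, ad(𝖺)^j 𝖻⁆`. -/
def IsEpsDual (n : ℕ) (D : LieDerivation ℚ L2 L2) : Prop :=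
  D ga = (adL ga ^ (2 * n + 2)) gb ∧
  D gb = (1 / 2 : ℚ) • ∑ i ∈ Finset.range (2 * n + 2),
    ((-1 : ℚ)) ^ i • ⁅(adL ga ^ i) gb, (adL ga ^ (2 * n + 1 - i)) gb⁆

/-- A Lie derivation `D` of `L2` is of type `ε_{2n+2}` (the conjugate of `ε^∨_{2n+2}` by
the automorphism `𝖺 ↦ 𝖻, 𝖻 ↦ -𝖺`). -/
def IsEps (n : ℕ) (D : LieDerivation ℚ L2 L2) : Prop :=
  D ga = -((1 / 2 : ℚ) • ∑ i ∈ Finset.range (2 * n + 2),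
    ((-1 : ℚ)) ^ i • ⁅(adL gb ^ i) ga, (adL gb ^ (2 * n + 1 - i)) ga⁆) ∧
  D gb = -((adL gb ^ (2 * n + 2)) ga)

/-- A Lie derivation is of type `ε₀^∨` if it sends `𝖺 ↦ 𝖻` and `𝖻 ↦ 0`. -/
def IsEpsZeroDual (D : LieDerivation ℚ L2 L2) : Prop :=
  D ga = gb ∧ D gb = 0

/-- A Lie derivation is of type `ε₀` if it sends `𝖺 ↦ 0` and `𝖻 ↦ -𝖺`. -/
def IsEpsZero (D : LieDerivation ℚ L2 L2) : Prop :=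
  D ga = 0 ∧ D gb = -ga

/-!
Let `ℚ[X] ⋊ ℚ[X]` be the Lie algebra of affine maps `t ↦ p * t + q` over `ℚ[X]`, realised by
`2 × 2` matrices with vanishing second row, and represent the free Lie algebra in it by
`𝖺 ↦ (X, 1)` and `𝖻 ↦ (1, 0)`. Differentiating coefficients sends `(X, 1)` to `(1, 0)` and `(1, 0)`
to `0`, so `ε₀^∨` acts as `d/dX`. Since `ad(𝖺)^(i+1) 𝖻` maps to the translation by `-X ^ i` and
translations commute, only the two extreme terms of `ε^∨_{2n+2}(𝖻)` survive, and they add up to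
the translation by `-X ^ (2 * n)`. As `ε₀^∨(𝖻) = 0`, the value of `(ad ε₀^∨)^k ε^∨_{2n+2}` at `𝖻`
is the `k`-th iterate of `ε₀^∨` on `ε^∨_{2n+2}(𝖻)`, hence maps to the translation by the `k`-th
derivative of `-X ^ (2 * n)`; these derivatives are linearly independent for `k ≤ 2 * n`.
-/

section LinearIndependence

variable {R M : Type*} [CommRing R] [IsDomain R] [AddCommGroup M] [Module R M]
  [Module.IsTorsionFree R M]

lemma linearIndependent_pow_apply_of_pow_succ_apply_eq_zero {f : Module.End R M} {v : M} {m : ℕ}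
    (hm : (f ^ m) v ≠ 0) (hm' : (f ^ (m + 1)) v = 0) :
    LinearIndependent R fun k : Fin (m + 1) => (f ^ (k : ℕ)) v := by
  rw [Fintype.linearIndependent_iff]
  intro g hg k
  induction k using WellFoundedLT.induction with
  | _ k ih =>
  have hterm : ∀ j ≠ k, (f ^ (m - k)) (g j • (f ^ (j : ℕ)) v) = 0 := by
    intro j hj
    rcases lt_or_gt_of_ne hj with hlt | hgt
    · rw [ih j hlt, zero_smul, map_zero]
    · rw [map_smul, ← Module.End.mul_apply, ← pow_add,
        Module.End.pow_map_zero_of_le (by omega : m + 1 ≤ m - k + j) hm', smul_zero]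
  have hk : g k • (f ^ m) v = 0 := calc
    g k • (f ^ m) v = (f ^ (m - k)) (g k • (f ^ (k : ℕ)) v) := by
      rw [map_smul, ← Module.End.mul_apply, ← pow_add, Nat.sub_add_cancel k.is_le]
    _ = (f ^ (m - k)) (∑ j, g j • (f ^ (j : ℕ)) v) := by
      rw [map_sum, Fintype.sum_eq_single k hterm]
    _ = 0 := by rw [hg, map_zero]
  exact (smul_eq_zero_iff_left hm).1 hk

end LinearIndependence

section Derivative

open Polynomial

variable {R : Type*} [CommRing R] [IsDomain R] [CharZero R]

lemma iterate_derivative_natDegree_ne_zero {p : R[X]} (hp : p ≠ 0) :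
    derivative^[p.natDegree] p ≠ 0 := by
  intro h
  have hcoeff := congrArg (coeff · 0) h
  simp [coeff_iterate_derivative, hp] at hcoeff

lemma linearIndependent_iterate_derivative {p : R[X]} (hp : p ≠ 0) {m : ℕ}
    (hm : p.natDegree = m) : LinearIndependent R fun k : Fin (m + 1) => derivative^[k] p := by
  subst hm
  simpa only [Module.End.pow_apply] using
    linearIndependent_pow_apply_of_pow_succ_apply_eq_zero (f := derivative) (v := p)
      (by simpa only [Module.End.pow_apply] using iterate_derivative_natDegree_ne_zero hp)
      (by simpa only [Module.End.pow_apply] using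
        iterate_derivative_eq_zero (Nat.lt_succ_self p.natDegree))

end Derivative

section LieDerivation

variable {R L L' : Type*} [CommRing R] [LieRing L] [LieAlgebra R L] [LieRing L'] [LieAlgebra R L']

lemma ad_pow_lieDerivation_apply_of_apply_eq_zero {E : LieDerivation R L L} {x : L} (hx : E x = 0)
    (D : LieDerivation R L L) (k : ℕ) :
    ((LieAlgebra.ad R (LieDerivation R L L) E ^ k) D) x = E^[k] (D x) := by
  induction k with
  | zero => simp
  | succ k ih =>
    rw [pow_succ', Module.End.mul_apply, LieAlgebra.ad_apply, LieDerivation.commutator_apply, hx,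
      map_zero, sub_zero, ih, Function.iterate_succ_apply']

lemma semiconj_lieDerivation_of_lieSpan_eq_top {f : L →ₗ⁅R⁆ L'} {D : LieDerivation R L L}
    {D' : LieDerivation R L' L'} {s : Set L} (hs : LieSubalgebra.lieSpan R L s = ⊤)
    (h : ∀ x ∈ s, f (D x) = D' (f x)) : Function.Semiconj f D D' := by
  intro x
  have hx : x ∈ LieSubalgebra.lieSpan R L s := hs ▸ LieSubalgebra.mem_top x
  induction hx using LieSubalgebra.lieSpan_induction with
  | mem x hx => exact h x hx
  | zero => simp only [map_zero]
  | add x y _ _ hx hy => simp only [map_add, hx, hy]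
  | smul c x _ hx => simp only [map_smul, hx]
  | lie x y _ _ hx hy =>
    simp only [LieDerivation.apply_lie_eq_add, LieHom.map_lie, map_add, hx, hy]

lemma freeLieAlgebra_lieSpan_range_of (R X : Type*) [CommRing R] :
    LieSubalgebra.lieSpan R (FreeLieAlgebra R X) (Set.range (FreeLieAlgebra.of R)) = ⊤ := by
  set S := LieSubalgebra.lieSpan R (FreeLieAlgebra R X) (Set.range (FreeLieAlgebra.of R))
  let r : FreeLieAlgebra R X →ₗ⁅R⁆ S :=
    FreeLieAlgebra.lift R fun x => ⟨.of R x, LieSubalgebra.subset_lieSpan ⟨x, rfl⟩⟩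
  have hr : S.incl.comp r = LieHom.id := FreeLieAlgebra.hom_ext fun x => by simp [r]
  refine eq_top_iff.2 fun x _ => ?_
  rw [← show (r x : FreeLieAlgebra R X) = x from LieHom.congr_fun hr x]
  exact (r x).2

end LieDerivation

section Matrix

attribute [local instance] LieRing.ofAssociativeRing

variable {R A m : Type*} [CommRing R] [CommRing A] [Algebra R A] [Fintype m] [DecidableEq m]

/-- The entrywise action of a derivation of a commutative algebra on square matrices, as a
derivation of the commutator bracket. -/
def matrixLieDerivation (d : Derivation R A A) :
    LieDerivation R (Matrix m m A) (Matrix m m A) where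
  toLinearMap := (d : A →ₗ[R] A).mapMatrix
  leibniz' M N := by
    ext i j
    simp only [Ring.lie_def, Matrix.mul_apply, LinearMap.mapMatrix_apply, Matrix.map_apply,
      Matrix.sub_apply, Derivation.coeFn_coe, map_sub, map_sum, Derivation.leibniz, smul_eq_mul,
      Finset.sum_add_distrib, mul_comm]
    ring

@[simp]
lemma matrixLieDerivation_apply (d : Derivation R A A) (M : Matrix m m A) :
    matrixLieDerivation d M = M.map d := rfl

/-- The infinitesimal affine map `t ↦ p * t + q`, as an element of the Lie algebra of the affine
group. It acts on column vectors `(t, 1)`, so the second row is `0` rather than `(0, 1)`. -/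
def affineMatrix (p q : A) : Matrix (Fin 2) (Fin 2) A := !![p, q; 0, 0]

lemma affineMatrix_zero : affineMatrix (0 : A) 0 = 0 := by
  ext i j
  fin_cases i <;> fin_cases j <;> rfl

lemma affineMatrix_lie (p q p' q' : A) :
    ⁅affineMatrix p q, affineMatrix p' q'⁆ = affineMatrix 0 (p * q' - p' * q) := by
  ext i j
  fin_cases i <;> fin_cases j <;> simp [affineMatrix, Ring.lie_def, mul_comm]

lemma map_affineMatrix (d : Derivation R A A) (p q : A) :
    (affineMatrix p q).map d = affineMatrix (d p) (d q) := by
  ext i j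
  fin_cases i <;> fin_cases j <;> simp [affineMatrix]

lemma iterate_matrixLieDerivation_affineMatrix (d : Derivation R A A) (k : ℕ) (p q : A) :
    (matrixLieDerivation d)^[k] (affineMatrix p q) = affineMatrix (d^[k] p) (d^[k] q) := by
  induction k with
  | zero => rfl
  | succ k ih =>
    simp only [Function.iterate_succ_apply', ih, matrixLieDerivation_apply, map_affineMatrix]

end Matrix

section AffineRep

open Polynomial

attribute [local instance] LieRing.ofAssociativeRing

/-- The representation of the free Lie algebra by affine maps over `ℚ[X]` that turns `ε₀^∨` into
`d/dX`. -/
def affineRep : L2 →ₗ⁅ℚ⁆ Matrix (Fin 2) (Fin 2) ℚ[X] :=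
  FreeLieAlgebra.lift ℚ ![affineMatrix X 1, affineMatrix 1 0]

lemma affineRep_ga : affineRep ga = affineMatrix X 1 := by simp [affineRep, ga]

lemma affineRep_gb : affineRep gb = affineMatrix 1 0 := by simp [affineRep, gb]

lemma semiconj_affineRep {D0 : LieDerivation ℚ L2 L2} (hD0 : IsEpsZeroDual D0) :
    Function.Semiconj affineRep D0 (matrixLieDerivation derivative') := by
  refine semiconj_lieDerivation_of_lieSpan_eq_top (freeLieAlgebra_lieSpan_range_of ℚ (Fin 2)) ?_
  rintro _ ⟨i, rfl⟩
  fin_cases i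
  · change affineRep (D0 ga) = matrixLieDerivation derivative' (affineRep ga)
    simp [hD0.1, affineRep_ga, affineRep_gb, map_affineMatrix]
  · change affineRep (D0 gb) = matrixLieDerivation derivative' (affineRep gb)
    simp [hD0.2, affineRep_gb, map_affineMatrix, affineMatrix_zero]

lemma affineRep_ad_pow_gb (i : ℕ) :
    affineRep ((adL ga ^ (i + 1)) gb) = affineMatrix 0 (-X ^ i) := by
  induction i with
  | zero => simp [adL, affineRep_ga, affineRep_gb, affineMatrix_lie]
  | succ i ih =>
    rw [pow_succ', Module.End.mul_apply, adL, LieAlgebra.ad_apply, LieHom.map_lie, ← adL, ih,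
      affineRep_ga, affineMatrix_lie]
    ring_nf

lemma affineRep_lie_ad_pow_gb (i j : ℕ) :
    affineRep ⁅(adL ga ^ (i + 1)) gb, (adL ga ^ (j + 1)) gb⁆ = 0 := by
  simp [affineRep_ad_pow_gb, affineMatrix_lie, affineMatrix_zero]

lemma affineRep_lie_gb_ad_pow_gb (i : ℕ) :
    affineRep ⁅gb, (adL ga ^ (i + 1)) gb⁆ = affineMatrix 0 (-X ^ i) := by
  simp [affineRep_ad_pow_gb, affineRep_gb, affineMatrix_lie]

/-- The value of `ε^∨_{2n+2}` at the generator `𝖻`. -/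
def epsDualGb (n : ℕ) : L2 :=
  (1 / 2 : ℚ) • ∑ i ∈ Finset.range (2 * n + 2),
    (-1 : ℚ) ^ i • ⁅(adL ga ^ i) gb, (adL ga ^ (2 * n + 1 - i)) gb⁆

lemma affineRep_epsDualGb (n : ℕ) :
    affineRep (epsDualGb n) = affineMatrix 0 (-X ^ (2 * n)) := by
  have hmiddle : ∀ i ∈ Finset.range (2 * n), affineRep ((-1 : ℚ) ^ (i + 1) •
      ⁅(adL ga ^ (i + 1)) gb, (adL ga ^ (2 * n + 1 - (i + 1))) gb⁆) = 0 := by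
    intro i hi
    obtain ⟨j, hj⟩ : ∃ j, 2 * n + 1 - (i + 1) = j + 1 :=
      Nat.exists_eq_succ_of_ne_zero (by have := Finset.mem_range.1 hi; omega)
    rw [hj, map_smul, affineRep_lie_ad_pow_gb, smul_zero]
  have hlast : affineRep ((-1 : ℚ) ^ (2 * n + 1) •
      ⁅(adL ga ^ (2 * n + 1)) gb, (adL ga ^ (2 * n + 1 - (2 * n + 1))) gb⁆) =
        affineMatrix 0 (-X ^ (2 * n)) := by
    rw [Odd.neg_one_pow ⟨n, rfl⟩, neg_one_smul, lie_skew, Nat.sub_self, pow_zero,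
      Module.End.one_apply, affineRep_lie_gb_ad_pow_gb]
  have hfirst : affineRep ((-1 : ℚ) ^ 0 •
      ⁅(adL ga ^ 0) gb, (adL ga ^ (2 * n + 1 - 0)) gb⁆) = affineMatrix 0 (-X ^ (2 * n)) := by
    rw [pow_zero, one_smul, pow_zero, Module.End.one_apply, Nat.sub_zero,
      affineRep_lie_gb_ad_pow_gb]
  rw [epsDualGb, map_smul, map_sum, Finset.sum_range_succ, Finset.sum_range_succ',
    Finset.sum_eq_zero hmiddle, hfirst, hlast, zero_add, ← two_smul ℚ, smul_smul]
  norm_num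

lemma affineRep_iterate_epsDualGb {D0 : LieDerivation ℚ L2 L2} (hD0 : IsEpsZeroDual D0)
    (n k : ℕ) :
    affineRep (D0^[k] (epsDualGb n)) = affineMatrix 0 (derivative^[k] (-X ^ (2 * n))) := by
  rw [(semiconj_affineRep hD0).iterate_right k, affineRep_epsDualGb,
    iterate_matrixLieDerivation_affineMatrix, iterate_map_zero]
  rfl

lemma linearIndependent_iterate_epsDualGb {D0 : LieDerivation ℚ L2 L2} (hD0 : IsEpsZeroDual D0)
    (n : ℕ) : LinearIndependent ℚ fun k : Fin (2 * n + 1) => D0^[k] (epsDualGb n) := by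
  let translationPart : L2 →ₗ[ℚ] ℚ[X] :=
    Matrix.entryLinearMap ℚ ℚ[X] (0 : Fin 2) (1 : Fin 2) ∘ₗ affineRep
  have himage : translationPart ∘ (fun k : Fin (2 * n + 1) => D0^[k] (epsDualGb n)) =
      fun k : Fin (2 * n + 1) => derivative^[k] (-X ^ (2 * n) : ℚ[X]) := by
    ext1 k
    simp [translationPart, affineRep_iterate_epsDualGb hD0, affineMatrix]
  refine LinearIndependent.of_comp translationPart ?_
  rw [himage]
  exact linearIndependent_iterate_derivative (neg_ne_zero.2 (pow_ne_zero _ X_ne_zero))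
    (by rw [natDegree_neg, natDegree_X_pow])

end AffineRep

theorem epsDual_linearIndependent (n : ℕ) (hn : 1 ≤ n)
    (D D0 : LieDerivation ℚ L2 L2)
    (hD : IsEpsDual n D) (hD0 : IsEpsZeroDual D0) :
    LinearIndependent ℚ (fun k : Fin (2 * n + 1) =>
      (LieAlgebra.ad ℚ (LieDerivation ℚ L2 L2) D0 ^ (k : ℕ)) D) := by
  let evalGb : LieDerivation ℚ L2 L2 →ₗ[ℚ] L2 :=
    LinearMap.applyₗ gb ∘ₗ (LieDerivation.toLinearMapLieHom ℚ L2 : _ →ₗ[ℚ] L2 →ₗ[ℚ] L2)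
  have himage : evalGb ∘ (fun k : Fin (2 * n + 1) =>
      (LieAlgebra.ad ℚ (LieDerivation ℚ L2 L2) D0 ^ (k : ℕ)) D) =
        fun k : Fin (2 * n + 1) => D0^[k] (epsDualGb n) := by
    ext1 k
    calc ((LieAlgebra.ad ℚ (LieDerivation ℚ L2 L2) D0 ^ (k : ℕ)) D) gb
      _ = D0^[k] (D gb) := ad_pow_lieDerivation_apply_of_apply_eq_zero hD0.2 D k
      _ = D0^[k] (epsDualGb n) := by rw [hD.2, epsDualGb]
  refine LinearIndependent.of_comp evalGb ?_
  rw [himage]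
  exact linearIndependent_iterate_epsDualGb hD0 n
end
end

section
/- Let D₄, D₆, D₈, D₁₀, D₁₂, D₁₄ be Lie derivations of L of types ε^∨_{4}, ε^∨_{6}, ε^∨_{8}, ε^∨_{10}, ε^∨_{12}, ε^∨_{14} respectively (i.e., the cases n = 1, …, 6). Then the Pollack relation 2 • ⁅D₁₄, D₄⁆ − 7 • ⁅D₁₂, D₆⁆ + 11 • ⁅D₁₀, D₈⁆ = 0 holds in the Lie algebra of Lie derivations of L. -/
open scoped BigOperators

noncomputable section

/-!
The derivations `ε^∨_{2n+2}` kill `⁅𝖺, 𝖻⁆` and raise the degree in `𝖻` by one, so the left-hand side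
`D` of the relation kills `⁅𝖺, 𝖻⁆` and raises the degree in `𝖻` by two. Such a `D` is determined by
`D 𝖺`: if `D 𝖺 = 0`, then `D 𝖻` commutes with `𝖺`, hence has degree `0` in `𝖻`, whereas it is
homogeneous of degree `3`. That the centralizer of `𝖺` has degree `0` in `𝖻` is seen on the Fox
derivative with respect to `𝖻`, which turns `⁅𝖺, u⁆ = 0` into `𝖺 * ∂u = 0` in the free associative
algebra, a domain.

The value `D 𝖺` is a combination of brackets `⁅ad(𝖺)^i 𝖻, ad(𝖺)^j 𝖻⁆`. Encoding these as `x^i y^j`,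
`ad 𝖺` becomes multiplication by `x + y`, and a symmetric polynomial represents `0`. The relation
thus amounts to the symmetry of an explicit polynomial in `x` and `y`.
-/

section FreeLieAlgebra

attribute [local instance] LieRing.ofAssociativeRing LieAlgebra.ofAssociativeAlgebra

open FreeLieAlgebra

variable {R X : Type*} [CommRing R]

theorem lieSpan_range_of :
    LieSubalgebra.lieSpan R (FreeLieAlgebra R X) (Set.range (of R)) = ⊤ := by
  set S := LieSubalgebra.lieSpan R (FreeLieAlgebra R X) (Set.range (of R))
  let toSpan : FreeLieAlgebra R X →ₗ⁅R⁆ S :=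
    lift R fun x => ⟨of R x, LieSubalgebra.subset_lieSpan ⟨x, rfl⟩⟩
  have incl_comp : S.incl.comp toSpan = LieHom.id := hom_ext fun x => by simp [toSpan]
  refine eq_top_iff.mpr fun u _ => ?_
  rw [show u = toSpan u from (LieHom.congr_fun incl_comp u).symm]
  exact (toSpan u).2

section Derivation

variable {M : Type*} [AddCommGroup M] [Module R M] [LieRingModule (FreeLieAlgebra R X) M]
  [LieModule R (FreeLieAlgebra R X) M]

theorem lieDerivation_ext {D D' : LieDerivation R (FreeLieAlgebra R X) M}
    (h : ∀ x, D (of R x) = D' (of R x)) : D = D' :=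
  LieDerivation.ext_of_lieSpan_eq_top _ lieSpan_range_of <| by
    rintro _ ⟨x, rfl⟩
    exact h x

/-- The action of the free Lie algebra on `M × R` by affine transformations of `M`, the generator
`x` acting by `m ↦ ⁅x, m⁆ + f x`. Its translation part is the derivation extending `f`. -/
def affineAction (f : X → M) : FreeLieAlgebra R X →ₗ⁅R⁆ Module.End R (M × R) :=
  lift R fun x => LinearMap.inl R M R ∘ₗ
    (LieModule.toEnd R _ M (of R x)).coprod (LinearMap.toSpanSingleton R M (f x))

theorem exists_affineAction_apply_eq (f : X → M) (u : FreeLieAlgebra R X) :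
    ∃ t : M, ∀ p : M × R, affineAction f u p = (⁅u, p.1⁆ + p.2 • t, 0) := by
  have hu : u ∈ LieSubalgebra.lieSpan R (FreeLieAlgebra R X) (Set.range (of R)) := by
    simp [lieSpan_range_of]
  induction hu using LieSubalgebra.lieSpan_induction with
  | mem u hu =>
    obtain ⟨x, rfl⟩ := hu
    exact ⟨f x, fun p => by simp [affineAction]⟩
  | zero => exact ⟨0, fun p => by simp [← Prod.zero_eq_mk]⟩
  | add u v _ _ hu hv =>
    obtain ⟨t, ht⟩ := hu
    obtain ⟨s, hs⟩ := hv
    exact ⟨t + s, fun p => by simp [ht, hs, add_add_add_comm]⟩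
  | smul c u _ hu =>
    obtain ⟨t, ht⟩ := hu
    exact ⟨c • t, fun p => by simp [ht, smul_comm c]⟩
  | lie u v _ _ hu hv =>
    obtain ⟨t, ht⟩ := hu
    obtain ⟨s, hs⟩ := hv
    refine ⟨⁅u, s⁆ - ⁅v, t⁆, fun p => ?_⟩
    simp [LieRing.of_associative_ring_bracket, ht, hs, lie_lie, smul_sub, add_sub_add_comm]

/-- The derivation of the free Lie algebra with prescribed values on the generators. -/
def liftDerivation (f : X → M) : LieDerivation R (FreeLieAlgebra R X) M where
  toLinearMap := LinearMap.fst R M R ∘ₗ LinearMap.applyₗ ((0, 1) : M × R) ∘ₗ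
    (affineAction (R := R) f).toLinearMap
  leibniz' u v := by
    obtain ⟨t, ht⟩ := exists_affineAction_apply_eq f u
    obtain ⟨s, hs⟩ := exists_affineAction_apply_eq f v
    simp [LieRing.of_associative_ring_bracket, ht, hs]

@[simp]
theorem liftDerivation_of (f : X → M) (x : X) : liftDerivation f (of R x) = f x := by
  simp [liftDerivation, affineAction]

end Derivation

/-- The canonical Lie algebra morphism to the free associative algebra. -/
def toFreeAlgebra : FreeLieAlgebra R X →ₗ⁅R⁆ FreeAlgebra R X :=
  lift R (FreeAlgebra.ι R)

/-- The free Lie algebra acts on the free associative algebra, its enveloping algebra, by left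
multiplication. -/
instance : LieRingModule (FreeLieAlgebra R X) (FreeAlgebra R X) where
  bracket u t := toFreeAlgebra u * t
  add_lie u v t := by simp [add_mul]
  lie_add u s t := by simp [mul_add]
  leibniz_lie u v t := by simp [LieRing.of_associative_ring_bracket, sub_mul, mul_assoc]

theorem lie_freeAlgebra (u : FreeLieAlgebra R X) (t : FreeAlgebra R X) :
    ⁅u, t⁆ = toFreeAlgebra u * t :=
  rfl

instance : LieModule R (FreeLieAlgebra R X) (FreeAlgebra R X) where
  smul_lie c u t := by simp [lie_freeAlgebra]
  lie_smul c u t := by simp [lie_freeAlgebra]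

/-- The adjoint action, extended to the free associative algebra. -/
def adFreeAlgebra : FreeAlgebra R X →ₐ[R] Module.End R (FreeLieAlgebra R X) :=
  FreeAlgebra.lift R fun x => LieAlgebra.ad R _ (of R x)

theorem adFreeAlgebra_toFreeAlgebra (u v : FreeLieAlgebra R X) :
    adFreeAlgebra (toFreeAlgebra u) v = ⁅u, v⁆ := by
  have h : (adFreeAlgebra : FreeAlgebra R X →ₐ[R] _).toLieHom.comp toFreeAlgebra =
      LieAlgebra.ad R (FreeLieAlgebra R X) :=
    hom_ext fun x => by simp [adFreeAlgebra, toFreeAlgebra]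
  exact LinearMap.congr_fun (LieHom.congr_fun h u) v

variable [DecidableEq X]

/-- The Fox derivative with respect to the generator `y`, restricted to the free Lie algebra:
if `toFreeAlgebra u = ∑ x, t x * x`, then `foxDerivation y u = t y`. -/
def foxDerivation (y : X) : LieDerivation R (FreeLieAlgebra R X) (FreeAlgebra R X) :=
  liftDerivation (Pi.single y 1)

/-- The derivation multiplying a Lie monomial by its degree in the generator `y`. -/
def degreeDerivation (y : X) :
    LieDerivation R (FreeLieAlgebra R X) (FreeLieAlgebra R X) :=
  liftDerivation (Pi.single y (of R y))

theorem adFreeAlgebra_foxDerivation (y : X) (u : FreeLieAlgebra R X) :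
    adFreeAlgebra (foxDerivation y u) (of R y) = degreeDerivation y u := by
  let D : LieDerivation R (FreeLieAlgebra R X) (FreeLieAlgebra R X) :=
    { toLinearMap := LinearMap.applyₗ (of R y) ∘ₗ adFreeAlgebra.toLinearMap ∘ₗ
        (foxDerivation (R := R) y).toLinearMap
      leibniz' := fun u v => by
        simp [LieDerivation.apply_lie_eq_sub, lie_freeAlgebra, adFreeAlgebra_toFreeAlgebra] }
  have hD : D = degreeDerivation y := lieDerivation_ext fun x => by
    rcases eq_or_ne x y with rfl | hxy
    · simp [D, foxDerivation, degreeDerivation]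
    · simp [D, foxDerivation, degreeDerivation, hxy]
  exact LieDerivation.congr_fun hD u

theorem degreeDerivation_eq_zero_of_lie_of_eq_zero [IsDomain R] {x y : X} (hxy : x ≠ y)
    {u : FreeLieAlgebra R X} (hu : ⁅of R x, u⁆ = 0) : degreeDerivation y u = 0 := by
  have hx : foxDerivation y (of R x) = 0 := by simp [foxDerivation, hxy]
  have hfox : FreeAlgebra.ι R x * foxDerivation y u = 0 := by
    simpa [LieDerivation.apply_lie_eq_sub, hx, lie_freeAlgebra, toFreeAlgebra] using
      congrArg (foxDerivation y) hu
  have hfox' : foxDerivation y u = 0 :=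
    (mul_eq_zero.mp hfox).resolve_left (FreeAlgebra.ι_ne_zero x)
  rw [← adFreeAlgebra_foxDerivation, hfox', map_zero, LinearMap.zero_apply]

end FreeLieAlgebra

section BracketSymbol

open MvPolynomial

theorem linearMap_ext_X_pow_mul_X_pow {R M : Type*} [CommSemiring R] [AddCommMonoid M] [Module R M]
    {f g : MvPolynomial (Fin 2) R →ₗ[R] M}
    (h : ∀ i j, f (X 0 ^ i * X 1 ^ j) = g (X 0 ^ i * X 1 ^ j)) : f = g :=
  (basisMonomials (Fin 2) R).ext fun s => by
    simpa only [coe_basisMonomials, monomial_eq, map_one, one_mul, Finsupp.prod_pow,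
      Fin.prod_univ_two] using h (s 0) (s 1)

variable {R L : Type*} [CommRing R] [LieRing L] [LieAlgebra R L] (a b : L)

/-- The linear map `x ^ i * y ^ j ↦ ⁅ad(a)^i b, ad(a)^j b⁆`, which turns computations with brackets
of two such elements into computations in `R[x, y]`; here `x = X 0` and `y = X 1`. -/
def bracketSymbol : MvPolynomial (Fin 2) R →ₗ[R] L :=
  (basisMonomials (Fin 2) R).constr R fun s =>
    ⁅(LieAlgebra.ad R L a ^ s 0) b, (LieAlgebra.ad R L a ^ s 1) b⁆

theorem bracketSymbol_X_pow_mul_X_pow (i j : ℕ) :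
    bracketSymbol a b (X 0 ^ i * X 1 ^ j : MvPolynomial (Fin 2) R) =
      ⁅(LieAlgebra.ad R L a ^ i) b, (LieAlgebra.ad R L a ^ j) b⁆ := by
  have hmon : (X 0 ^ i * X 1 ^ j : MvPolynomial (Fin 2) R) =
      basisMonomials (Fin 2) R (Finsupp.single 0 i + Finsupp.single 1 j) := by
    simp [X_pow_eq_monomial, monomial_mul]
  rw [hmon, bracketSymbol, Module.Basis.constr_basis]
  simp

theorem bracketSymbol_X_add_X_mul (P : MvPolynomial (Fin 2) R) :
    bracketSymbol a b ((X 0 + X 1) * P) = ⁅a, bracketSymbol a b P⁆ := by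
  have h : bracketSymbol a b ∘ₗ LinearMap.mulLeft R (X 0 + X 1) =
      LieAlgebra.ad R L a ∘ₗ bracketSymbol a b := linearMap_ext_X_pow_mul_X_pow fun i j => by
    have hmul : ((X 0 + X 1) * (X 0 ^ i * X 1 ^ j) : MvPolynomial (Fin 2) R) =
        X 0 ^ (i + 1) * X 1 ^ j + X 0 ^ i * X 1 ^ (j + 1) := by ring
    simp only [LinearMap.comp_apply, LinearMap.mulLeft_apply, hmul, map_add,
      bracketSymbol_X_pow_mul_X_pow]
    simp only [pow_succ', Module.End.mul_apply, LieAlgebra.ad_apply, leibniz_lie a]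
  exact LinearMap.congr_fun h P

theorem bracketSymbol_rename_swap (P : MvPolynomial (Fin 2) R) :
    bracketSymbol a b (rename (Equiv.swap 0 1) P) = -bracketSymbol a b P := by
  have h : bracketSymbol a b ∘ₗ (rename (Equiv.swap 0 1)).toLinearMap =
      -bracketSymbol (R := R) a b := linearMap_ext_X_pow_mul_X_pow fun i j => by
    have hswap : rename (Equiv.swap 0 1) (X 0 ^ i * X 1 ^ j : MvPolynomial (Fin 2) R) =
        X 0 ^ j * X 1 ^ i := by simp [mul_comm]
    simp [hswap, bracketSymbol_X_pow_mul_X_pow]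
  exact LinearMap.congr_fun h P

theorem bracketSymbol_eq_zero_of_symmetric [IsAddTorsionFree L] {P : MvPolynomial (Fin 2) R}
    (hP : rename (Equiv.swap 0 1) P = P) : bracketSymbol a b P = 0 :=
  self_eq_neg.mp <| by rw [← bracketSymbol_rename_swap, hP]

variable {a b}

theorem lieDerivation_apply_ad_pow_succ {D : LieDerivation R L L} {k : ℕ}
    (ha : D a = (LieAlgebra.ad R L a ^ (k + 1)) b) (hab : D ⁅a, b⁆ = 0) (i : ℕ) :
    D ((LieAlgebra.ad R L a ^ (i + 1)) b) =
      bracketSymbol a b (X 0 ^ k * X 1 * ((X 0 + X 1) ^ i - X 1 ^ i) : MvPolynomial _ R) := by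
  induction i with
  | zero => simp [hab]
  | succ i ih =>
    calc D ((LieAlgebra.ad R L a ^ (i + 1 + 1)) b)
        = ⁅a, D ((LieAlgebra.ad R L a ^ (i + 1)) b)⁆ +
            ⁅D a, (LieAlgebra.ad R L a ^ (i + 1)) b⁆ := by
          rw [pow_succ', Module.End.mul_apply, LieAlgebra.ad_apply, LieDerivation.apply_lie_eq_add]
      _ = bracketSymbol a b ((X 0 + X 1) * (X 0 ^ k * X 1 * ((X 0 + X 1) ^ i - X 1 ^ i)) +
            X 0 ^ (k + 1) * X 1 ^ (i + 1) : MvPolynomial _ R) := by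
          rw [ih, ha, map_add, bracketSymbol_X_add_X_mul, bracketSymbol_X_pow_mul_X_pow]
      _ = _ := by ring_nf

end BracketSymbol

theorem add_mul_half_geom_sum₂_add_pow {A : Type*} [CommRing A] [Algebra ℚ A] (x y : A) {N : ℕ}
    (hN : Even N) :
    (x + y) * ((1 / 2 : ℚ) • ∑ i ∈ Finset.range N, (-x) ^ i * y ^ (N - 1 - i)) + x ^ N =
      (1 / 2 : ℚ) • (x ^ N + y ^ N) := by
  have hsum : (x + y) * ∑ i ∈ Finset.range N, (-x) ^ i * y ^ (N - 1 - i) = y ^ N - x ^ N := by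
    linear_combination -geom_sum₂_mul (-x) y N - hN.neg_pow x
  rw [mul_smul_comm, hsum]
  module

section PollackPolynomial

variable {A : Type*} [CommRing A]

/-- With `x = X 0` and `y = X 1`, the polynomial whose `bracketSymbol` is the value at `𝖺` of the
commutator of the derivations `ε^∨_{2m+2}` and `ε^∨_{2n+2}`. -/
def pollackPolynomial (x y : A) (m n : ℕ) : A :=
  x ^ (2 * m + 1) * y * ((x + y) ^ (2 * n + 1) - y ^ (2 * n + 1)) -
    x ^ (2 * n + 1) * y * ((x + y) ^ (2 * m + 1) - y ^ (2 * m + 1))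

theorem map_pollackPolynomial {B F : Type*} [CommRing B] [FunLike F A B] [RingHomClass F A B]
    (f : F) (x y : A) (m n : ℕ) :
    f (pollackPolynomial x y m n) = pollackPolynomial (f x) (f y) m n := by
  simp [pollackPolynomial]

theorem pollackPolynomial_weight_sixteen_comm (x y : A) :
    2 • pollackPolynomial x y 6 1 - 7 • pollackPolynomial x y 5 2 + 11 • pollackPolynomial x y 4 3 =
      2 • pollackPolynomial y x 6 1 - 7 • pollackPolynomial y x 5 2 +
        11 • pollackPolynomial y x 4 3 := by
  simp only [pollackPolynomial]
  ring

end PollackPolynomial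

section EpsDual

instance : IsAddTorsionFree L2 := .of_module_rat L2

open MvPolynomial

namespace IsEpsDual

variable {m n : ℕ} {D D' : LieDerivation ℚ L2 L2}

theorem apply_gb (h : IsEpsDual n D) :
    D gb = bracketSymbol ga gb ((1 / 2 : ℚ) • ∑ i ∈ Finset.range (2 * n + 2),
      (-X 0 : MvPolynomial (Fin 2) ℚ) ^ i * X 1 ^ (2 * n + 2 - 1 - i)) := by
  rw [h.2, map_smul, map_sum]
  congr! 2 with i
  have hsign : (-X 0 : MvPolynomial (Fin 2) ℚ) ^ i * X 1 ^ (2 * n + 2 - 1 - i) =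
      (-1 : ℚ) ^ i • (X 0 ^ i * X 1 ^ (2 * n + 1 - i)) := by
    simp [neg_pow (X 0 : MvPolynomial (Fin 2) ℚ), smul_eq_C_mul, mul_assoc]
  rw [hsign, map_smul, bracketSymbol_X_pow_mul_X_pow]
  rfl

theorem apply_lie_ga_gb (h : IsEpsDual n D) : D ⁅ga, gb⁆ = 0 := by
  have ha : ⁅D ga, gb⁆ = bracketSymbol ga gb (X 0 ^ (2 * n + 2) : MvPolynomial (Fin 2) ℚ) := by
    simpa [h.1, adL] using (bracketSymbol_X_pow_mul_X_pow (R := ℚ) ga gb (2 * n + 2) 0).symm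
  rw [LieDerivation.apply_lie_eq_add, h.apply_gb, ha, ← bracketSymbol_X_add_X_mul, ← map_add,
    add_mul_half_geom_sum₂_add_pow _ _ ((even_two_mul n).add even_two)]
  exact bracketSymbol_eq_zero_of_symmetric ga gb (by simp [add_comm])

theorem commutator_apply_ga (h : IsEpsDual m D) (h' : IsEpsDual n D') :
    ⁅D, D'⁆ ga = bracketSymbol ga gb (pollackPolynomial (X 0) (X 1) m n : MvPolynomial _ ℚ) := by
  rw [LieDerivation.commutator_apply, h.1, h'.1, adL, pollackPolynomial, map_sub,
    lieDerivation_apply_ad_pow_succ h.1 h.apply_lie_ga_gb,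
    lieDerivation_apply_ad_pow_succ h'.1 h'.apply_lie_ga_gb]

theorem commutator_apply_lie_ga_gb (h : IsEpsDual m D) (h' : IsEpsDual n D') :
    ⁅D, D'⁆ ⁅ga, gb⁆ = 0 := by
  rw [LieDerivation.commutator_apply, h.apply_lie_ga_gb, h'.apply_lie_ga_gb, map_zero, map_zero,
    sub_zero]

end IsEpsDual

/-- The derivation of `L2` multiplying a Lie monomial by its degree in `𝖻`. -/
def gbDegree : LieDerivation ℚ L2 L2 := degreeDerivation 1

@[simp]
theorem gbDegree_ga : gbDegree ga = 0 := by
  simp [gbDegree, degreeDerivation, ga]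

@[simp]
theorem gbDegree_gb : gbDegree gb = gb := by
  simp [gbDegree, degreeDerivation, gb]

theorem gbDegree_ad_pow_gb (i : ℕ) : gbDegree ((adL ga ^ i) gb) = (adL ga ^ i) gb := by
  induction i with
  | zero => simp
  | succ i ih =>
    have hsucc : (adL ga ^ (i + 1)) gb = ⁅ga, (adL ga ^ i) gb⁆ := by simp [pow_succ', adL]
    rw [hsucc, LieDerivation.apply_lie_eq_add, ih, gbDegree_ga, zero_lie, add_zero]

theorem lieDerivation_L2_ext {D D' : LieDerivation ℚ L2 L2} (ha : D ga = D' ga)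
    (hb : D gb = D' gb) : D = D' :=
  lieDerivation_ext <| Fin.forall_fin_two.mpr ⟨ha, hb⟩

theorem IsEpsDual.gbDegree_lie {n : ℕ} {D : LieDerivation ℚ L2 L2} (h : IsEpsDual n D) :
    ⁅gbDegree, D⁆ = D := by
  apply lieDerivation_L2_ext
  · simp [h.1, gbDegree_ad_pow_gb]
  · have hb : gbDegree (D gb) = D gb + D gb := by
      simp only [h.2, map_smul, map_sum, LieDerivation.apply_lie_eq_add, gbDegree_ad_pow_gb,
        smul_add, Finset.sum_add_distrib]
    simp [hb]

theorem IsEpsDual.gbDegree_lie_commutator {m n : ℕ} {D D' : LieDerivation ℚ L2 L2}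
    (h : IsEpsDual m D) (h' : IsEpsDual n D') : ⁅gbDegree, ⁅D, D'⁆⁆ = 2 • ⁅D, D'⁆ := by
  rw [leibniz_lie, h.gbDegree_lie, h'.gbDegree_lie, two_nsmul]

theorem lieDerivation_eq_zero_of_gbDegree_lie_eq_nsmul {D : LieDerivation ℚ L2 L2} {k : ℕ}
    (hdeg : ⁅gbDegree, D⁆ = k • D) (ha : D ga = 0) (hab : D ⁅ga, gb⁆ = 0) : D = 0 := by
  have hcomm : ⁅ga, D gb⁆ = 0 := by simpa [LieDerivation.apply_lie_eq_add, ha] using hab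
  have hzero : gbDegree (D gb) = 0 :=
    degreeDerivation_eq_zero_of_lie_of_eq_zero (by decide) hcomm
  have hdegb : (k + 1) • D gb = 0 := by
    have := LieDerivation.congr_fun hdeg gb
    rw [LieDerivation.commutator_apply, hzero, gbDegree_gb, zero_sub] at this
    rw [succ_nsmul, ← LieDerivation.smul_apply, ← this, neg_add_cancel]
  exact lieDerivation_L2_ext ha ((smul_eq_zero.mp hdegb).resolve_left k.succ_ne_zero)

end EpsDual

theorem pollack_relation_depth_two_weight_sixteen
    (D4 D6 D8 D10 D12 D14 : LieDerivation ℚ L2 L2)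
    (h4 : IsEpsDual 1 D4) (h6 : IsEpsDual 2 D6)
    (h8 : IsEpsDual 3 D8) (h10 : IsEpsDual 4 D10)
    (h12 : IsEpsDual 5 D12) (h14 : IsEpsDual 6 D14) :
    2 • ⁅D14, D4⁆ - 7 • ⁅D12, D6⁆ + 11 • ⁅D10, D8⁆ = 0 := by
  apply lieDerivation_eq_zero_of_gbDegree_lie_eq_nsmul (k := 2)
  · simp only [lie_add, lie_sub, lie_nsmul, h14.gbDegree_lie_commutator h4,
      h12.gbDegree_lie_commutator h6, h10.gbDegree_lie_commutator h8]
    module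
  · simp only [LieDerivation.add_apply, LieDerivation.sub_apply, LieDerivation.smul_apply,
      h14.commutator_apply_ga h4, h12.commutator_apply_ga h6, h10.commutator_apply_ga h8,
      ← map_nsmul, ← map_sub, ← map_add]
    apply bracketSymbol_eq_zero_of_symmetric
    simp only [map_add, map_sub, map_nsmul, map_pollackPolynomial, MvPolynomial.rename_X,
      Equiv.swap_apply_left, Equiv.swap_apply_right]
    exact pollackPolynomial_weight_sixteen_comm _ _
  · simp only [LieDerivation.add_apply, LieDerivation.sub_apply, LieDerivation.smul_apply,
      h14.commutator_apply_lie_ga_gb h4, h12.commutator_apply_lie_ga_gb h6,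
      h10.commutator_apply_lie_ga_gb h8, smul_zero, sub_zero, add_zero]
end
end

section
/- Let e be a Lie derivation of L of type ε₀^∨ and let f be a Lie derivation of type ε₀, and set h := ⁅e, f⁆ in the Lie algebra of Lie derivations of L. Then h(𝖺) = 𝖺 and h(𝖻) = −𝖻, and the sl₂-relations ⁅h, e⁆ = −2 • e and ⁅h, f⁆ = 2 • f hold; in particular e, f, h span a Lie subalgebra isomorphic to sl₂. -/
open scoped BigOperators

noncomputable section

/-!
Write `h = ⁅e, f⁆`. The generators `𝖺` and `𝖻` are eigenvectors of `h`, of weights `1` and `-1`, and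
`e` lowers weights by `2` while `f` raises them by `2`. A derivation that shifts the weights of a
generating set by `d` is itself an eigenvector of `⁅h, ·⁆`, of eigenvalue `d`, because derivations
are determined by their values on generators.
-/

open LieSubalgebra Set

section LieDerivation

variable {R L : Type*} [CommRing R] [LieRing L] [LieAlgebra R L]

theorem lie_apply_eq_smul_of_weight_shift {h D : LieDerivation R L L} {x : L} {c d : R}
    (hx : h x = c • x) (hDx : h (D x) = (c + d) • D x) : ⁅h, D⁆ x = d • D x := by
  rw [LieDerivation.lie_apply, hDx, hx, map_smul, add_smul, add_sub_cancel_left]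

theorem lie_eq_smul_of_weight_shift {h D : LieDerivation R L L} {s : Set L} {d : R}
    (hs : lieSpan R L s = ⊤)
    (hD : ∀ x ∈ s, ∃ c : R, h x = c • x ∧ h (D x) = (c + d) • D x) : ⁅h, D⁆ = d • D := by
  refine LieDerivation.ext_of_lieSpan_eq_top s hs fun x hxs ↦ ?_
  obtain ⟨c, hx, hDx⟩ := hD x hxs
  exact lie_apply_eq_smul_of_weight_shift hx hDx

theorem sl2_triple_of_derivations_general {a b : L} (hab : lieSpan R L {a, b} = ⊤)
    (e f : LieDerivation R L L) (he : e a = b ∧ e b = 0) (hf : f a = 0 ∧ f b = -a) :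
    ⁅e, f⁆ a = a ∧ ⁅e, f⁆ b = -b ∧
    ⁅(⁅e, f⁆ : LieDerivation R L L), e⁆ = (-2 : R) • e ∧
    ⁅(⁅e, f⁆ : LieDerivation R L L), f⁆ = (2 : R) • f := by
  obtain ⟨hea, heb⟩ := he
  obtain ⟨hfa, hfb⟩ := hf
  have ha : ⁅e, f⁆ a = a := by
    rw [LieDerivation.lie_apply, hfa, hea, hfb, map_zero, zero_sub, neg_neg]
  have hb : ⁅e, f⁆ b = -b := by
    rw [LieDerivation.lie_apply, hfb, heb, map_neg, hea, map_zero, sub_zero]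
  have ha_weight : ⁅e, f⁆ a = (1 : R) • a := by rw [ha, one_smul]
  have hb_weight : ⁅e, f⁆ b = (-1 : R) • b := by rw [hb, neg_one_smul]
  refine ⟨ha, hb, lie_eq_smul_of_weight_shift hab ?_, lie_eq_smul_of_weight_shift hab ?_⟩
  · rintro x (rfl | rfl)
    · exact ⟨1, ha_weight, by rw [hea, hb]; module⟩
    · exact ⟨-1, hb_weight, by rw [heb, map_zero, smul_zero]⟩
  · rintro x (rfl | rfl)
    · exact ⟨1, ha_weight, by rw [hfa, map_zero, smul_zero]⟩
    · exact ⟨-1, hb_weight, by rw [hfb, map_neg, ha]; module⟩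

end LieDerivation

theorem lieSpan_range_freeLieAlgebra_of_eq_top (R X : Type*) [CommRing R] :
    lieSpan R (FreeLieAlgebra R X) (range (FreeLieAlgebra.of R)) = ⊤ := by
  set S := lieSpan R (FreeLieAlgebra R X) (range (FreeLieAlgebra.of R))
  -- The inclusion of `S` has a section by the universal property, so it is surjective.
  let F : FreeLieAlgebra R X →ₗ⁅R⁆ S :=
    FreeLieAlgebra.lift R fun i ↦ ⟨FreeLieAlgebra.of R i, subset_lieSpan (mem_range_self i)⟩
  have hF : S.incl.comp F = LieHom.id := FreeLieAlgebra.hom_ext fun i ↦ by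
    simp only [F, LieHom.comp_apply, FreeLieAlgebra.lift_of_apply, coe_incl, LieHom.id_apply]
  refine eq_top_iff.mpr fun x _ ↦ ?_
  have hx : (F x : FreeLieAlgebra R X) = x := LieHom.congr_fun hF x
  exact hx ▸ (F x).property

theorem lieSpan_ga_gb_eq_top : lieSpan ℚ L2 {ga, gb} = ⊤ := by
  have hrange : range (FreeLieAlgebra.of ℚ : Fin 2 → L2) = {ga, gb} := by
    ext x
    simp only [mem_range, Fin.exists_fin_two, mem_insert_iff, mem_singleton_iff, ga, gb, eq_comm]
  rw [← hrange, lieSpan_range_freeLieAlgebra_of_eq_top]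

theorem sl2_triple_of_derivations
    (e f : LieDerivation ℚ L2 L2)
    (he : IsEpsZeroDual e) (hf : IsEpsZero f) :
    ⁅e, f⁆ ga = ga ∧ ⁅e, f⁆ gb = -gb ∧
    ⁅(⁅e, f⁆ : LieDerivation ℚ L2 L2), e⁆ = (-2 : ℚ) • e ∧
    ⁅(⁅e, f⁆ : LieDerivation ℚ L2 L2), f⁆ = (2 : ℚ) • f :=
  sl2_triple_of_derivations_general lieSpan_ga_gb_eq_top e f he hf
end
end

section
/- Let n ≥ 1 and 0 ≤ k ≤ 2n. Let D be a Lie derivation of L of type ε^∨_{2n+2} and let D₀^∨ be a Lie derivation of type ε₀^∨. Then the derivation δ := (ad D₀^∨)^k(D) maps all of L into the Lie ideal of L generated by the generator 𝖻: for every x ∈ L, δ(x) lies in the smallest Lie ideal of L containing 𝖻. -/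
open scoped BigOperators

noncomputable section

/-!
Let `I` be the Lie ideal generated by `𝖻`. A derivation of a free Lie algebra has image in `I` as
soon as it sends the generators into `I`, and this holds for `D` because every term of `D 𝖺` and
`D 𝖻` is an iterated bracket containing `𝖻`. Since `D₀^∨ 𝖻 = 0`, the derivation `D₀^∨` preserves
`I`, and the commutator of a derivation preserving `I` with one having image in `I` again has image
in `I`.
-/

section LieDerivations

variable {R L M : Type*} [CommRing R] [LieRing L] [LieAlgebra R L]
  [AddCommGroup M] [Module R M] [LieRingModule L M] [LieModule R L M]

theorem toEnd_pow_apply_mem_of_mem (N : LieSubmodule R L M) (x : L) {m : M} (hm : m ∈ N) (k : ℕ) :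
    (LieModule.toEnd R L M x ^ k) m ∈ N :=
  Module.End.pow_apply_mem_of_forall_mem (p := N.toSubmodule) k (fun _ => N.lie_mem) m hm

theorem lieDerivation_apply_mem_of_mem_lieSpan {N : LieSubmodule R L M} {D : LieDerivation R L M}
    {s : Set L} (hs : ∀ y ∈ s, D y ∈ N) {x : L} (hx : x ∈ LieSubalgebra.lieSpan R L s) :
    D x ∈ N := by
  induction hx using LieSubalgebra.lieSpan_induction with
  | mem y hy => exact hs y hy
  | zero => simp only [map_zero, zero_mem]
  | add y z _ _ hy hz => simpa only [map_add] using add_mem hy hz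
  | smul t y _ hy => simpa only [map_smul] using SMulMemClass.smul_mem t hy
  | lie y z _ _ hy hz =>
    rw [LieDerivation.apply_lie_eq_sub]
    exact sub_mem (N.lie_mem hz) (N.lie_mem hy)

theorem lieDerivation_apply_mem_lieIdeal_lieSpan {E : LieDerivation R L L} {s : Set L}
    (hs : ∀ y ∈ s, E y ∈ LieSubmodule.lieSpan R L s) {x : L}
    (hx : x ∈ LieSubmodule.lieSpan R L s) : E x ∈ LieSubmodule.lieSpan R L s := by
  induction hx using LieSubmodule.lieSpan_induction with
  | mem y hy => exact hs y hy
  | zero => simp only [map_zero, zero_mem]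
  | add y z _ _ hy hz => simpa only [map_add] using add_mem hy hz
  | smul t y _ hy => simpa only [map_smul] using SMulMemClass.smul_mem t hy
  | lie y z hz ihz =>
    rw [LieDerivation.apply_lie_eq_add]
    exact add_mem (lie_mem_right R L _ _ _ ihz) (lie_mem_right R L _ _ _ hz)

/-- The submodule of Lie derivations `L → M` whose image is contained in the Lie submodule `N`.
Phrasing the image condition as membership in a submodule lets one iterate `ad E` on it. -/
def derivationsInto (N : LieSubmodule R L M) : Submodule R (LieDerivation R L M) where
  carrier := {D | ∀ x, D x ∈ N}
  zero_mem' _ := zero_mem N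
  add_mem' hD hE x := add_mem (hD x) (hE x)
  smul_mem' t _ hD x := N.smul_mem t (hD x)

theorem lie_mem_derivationsInto {I : LieIdeal R L} {E D : LieDerivation R L L}
    (hE : ∀ x ∈ I, E x ∈ I) (hD : D ∈ derivationsInto I) : ⁅E, D⁆ ∈ derivationsInto I := by
  intro x
  rw [LieDerivation.commutator_apply]
  exact sub_mem (hE _ (hD x)) (hD (E x))

theorem ad_pow_apply_mem_derivationsInto {I : LieIdeal R L} {E D : LieDerivation R L L}
    (hE : ∀ x ∈ I, E x ∈ I) (hD : D ∈ derivationsInto I) (k : ℕ) :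
    (LieAlgebra.ad R (LieDerivation R L L) E ^ k) D ∈ derivationsInto I :=
  Module.End.pow_apply_mem_of_forall_mem k (fun _ => lie_mem_derivationsInto hE) D hD

end LieDerivations

section FreeLieAlgebras

variable {R X : Type*} [CommRing R]

theorem lieSpan_range_freeLieAlgebra_of :
    LieSubalgebra.lieSpan R (FreeLieAlgebra R X) (Set.range (FreeLieAlgebra.of R)) = ⊤ := by
  set S := LieSubalgebra.lieSpan R (FreeLieAlgebra R X) (Set.range (FreeLieAlgebra.of R))
  let retraction : FreeLieAlgebra R X →ₗ⁅R⁆ S :=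
    FreeLieAlgebra.lift R fun i => ⟨FreeLieAlgebra.of R i, LieSubalgebra.subset_lieSpan ⟨i, rfl⟩⟩
  have incl_comp_retraction : S.incl.comp retraction = LieHom.id := by
    ext i
    simp [retraction]
  refine eq_top_iff.mpr fun x _ => ?_
  have coe_retraction : (retraction x : FreeLieAlgebra R X) = x :=
    LieHom.congr_fun incl_comp_retraction x
  exact coe_retraction ▸ (retraction x).2

theorem mem_derivationsInto_of_forall_of {M : Type*} [AddCommGroup M] [Module R M]
    [LieRingModule (FreeLieAlgebra R X) M] [LieModule R (FreeLieAlgebra R X) M]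
    {N : LieSubmodule R (FreeLieAlgebra R X) M} {D : LieDerivation R (FreeLieAlgebra R X) M}
    (hD : ∀ i, D (FreeLieAlgebra.of R i) ∈ N) : D ∈ derivationsInto N := fun _ =>
  lieDerivation_apply_mem_of_mem_lieSpan (Set.forall_mem_range.mpr hD)
    (lieSpan_range_freeLieAlgebra_of (R := R) (X := X) ▸ LieSubalgebra.mem_top _)

end FreeLieAlgebras

theorem IsEpsDual.mem_derivationsInto {n : ℕ} {D : LieDerivation ℚ L2 L2} (hD : IsEpsDual n D)
    {I : LieIdeal ℚ L2} (hb : gb ∈ I) : D ∈ derivationsInto I := by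
  have ad_pow_mem (m : ℕ) : (adL ga ^ m) gb ∈ I := toEnd_pow_apply_mem_of_mem I ga hb m
  refine mem_derivationsInto_of_forall_of (Fin.forall_fin_two.mpr ⟨?_, ?_⟩)
  · exact hD.1 ▸ ad_pow_mem _
  · refine hD.2 ▸ I.smul_mem _ (sum_mem fun i _ => I.smul_mem _ ?_)
    exact lie_mem_right ℚ L2 I _ _ (ad_pow_mem _)

theorem epsDual_image_in_ideal_of_b_general (n k : ℕ) (D E : LieDerivation ℚ L2 L2)
    (hD : IsEpsDual n D) (hE : E gb ∈ LieSubmodule.lieSpan ℚ L2 ({gb} : Set L2)) :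
    ∀ x : L2,
      ((LieAlgebra.ad ℚ (LieDerivation ℚ L2 L2) E ^ k) D) x ∈
        LieSubmodule.lieSpan ℚ L2 ({gb} : Set L2) := by
  have hb : gb ∈ LieSubmodule.lieSpan ℚ L2 ({gb} : Set L2) :=
    LieSubmodule.subset_lieSpan (Set.mem_singleton gb)
  have preserves : ∀ x ∈ LieSubmodule.lieSpan ℚ L2 ({gb} : Set L2),
      E x ∈ LieSubmodule.lieSpan ℚ L2 ({gb} : Set L2) := fun _ =>
    lieDerivation_apply_mem_lieIdeal_lieSpan (fun _ hy => hy ▸ hE)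
  exact ad_pow_apply_mem_derivationsInto preserves (hD.mem_derivationsInto hb) k

theorem epsDual_image_in_ideal_of_b (n k : ℕ) (hn : 1 ≤ n) (hk : k ≤ 2 * n)
    (D D0 : LieDerivation ℚ L2 L2)
    (hD : IsEpsDual n D) (hD0 : IsEpsZeroDual D0) :
    ∀ x : L2,
      ((LieAlgebra.ad ℚ (LieDerivation ℚ L2 L2) D0 ^ k) D) x ∈
        LieSubmodule.lieSpan ℚ L2 ({gb} : Set L2) :=
  epsDual_image_in_ideal_of_b_general n k D D0 hD (hD0.2 ▸ zero_mem _)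
end
end
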